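/- For every ν > 0 there exists a constant c > (ν+1)²/(4ν) such that for all δ > 0, ∫₀^δ exp(-r^ν/2) dr ≥ c_ν⁻¹ · exp(-c/δ^ν), where c_ν > 0 is the constant with c_ν · ∫₀^∞ exp(-r^ν/2) dr = 1. -/

import Mathlib

open Real MeasureTheory

/-!
For an integrable function `f` on `(0, ∞)` put `F x = ∫₀ˣ f`. The function
`F x * exp (c / x ^ ν)` tends to `∫₀^∞ f` as `x → ∞`, so it suffices that it decreases, which
amounts to `x ^ (ν + 1) * f x ≤ c * ν * F x`. For `f r = exp (-b * r ^ ν)` both sides vanish at `0`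
and the difference of their derivatives is `f x` times a quadratic polynomial in `x ^ ν`, which
is nonnegative as soon as its discriminant `(ν + 1) ^ 2 - 4 * b * c * ν ^ 2` is nonpositive.
-/

open Set Filter Topology

section LogDerivative

variable {f : ℝ → ℝ} {c ν : ℝ}

lemma hasDerivAt_exp_mul_rpow_neg {x : ℝ} (hx : x ≠ 0) :
    HasDerivAt (fun y ↦ exp (c * y ^ (-ν)))
      (-(c * ν * x ^ (-(ν + 1)) * exp (c * x ^ (-ν)))) x := by
  convert ((hasDerivAt_rpow_const (p := -ν) (Or.inl hx)).const_mul c).exp using 1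
  rw [neg_add']
  ring

lemma antitoneOn_integral_mul_exp_rpow_neg
    (hfi : ∀ x, 0 < x → IntervalIntegrable f volume 0 x) (hfc : ContinuousOn f (Ioi 0))
    (hf : ∀ x, 0 < x → x ^ (ν + 1) * f x ≤ c * ν * ∫ r in 0..x, f r) :
    AntitoneOn (fun x ↦ (∫ r in 0..x, f r) * exp (c * x ^ (-ν))) (Ioi 0) := by
  have hderiv : ∀ x ∈ Ioi (0 : ℝ), HasDerivAt (fun x ↦ (∫ r in 0..x, f r) * exp (c * x ^ (-ν)))
      (f x * exp (c * x ^ (-ν)) +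
        (∫ r in 0..x, f r) * -(c * ν * x ^ (-(ν + 1)) * exp (c * x ^ (-ν)))) x := fun x hx ↦
    (intervalIntegral.integral_hasDerivAt_right (hfi x hx)
      (hfc.stronglyMeasurableAtFilter isOpen_Ioi x hx)
      (hfc.continuousAt (Ioi_mem_nhds hx))).mul (hasDerivAt_exp_mul_rpow_neg hx.ne')
  refine antitoneOn_of_hasDerivWithinAt_nonpos (convex_Ioi 0)
    (fun x hx ↦ (hderiv x hx).continuousAt.continuousWithinAt)
    (fun x hx ↦ (hderiv x (interior_subset hx)).hasDerivWithinAt) fun x hx ↦ ?_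
  have hx : 0 < x := interior_subset hx
  have hle : f x ≤ c * ν * x ^ (-(ν + 1)) * ∫ r in 0..x, f r := by
    rw [rpow_neg hx.le, mul_right_comm, ← div_eq_mul_inv, le_div_iff₀' (rpow_pos_of_pos hx _)]
    exact hf x hx
  linarith [mul_le_mul_of_nonneg_right hle (exp_pos (c * x ^ (-ν))).le]

lemma tendsto_integral_mul_exp_rpow_neg (hν : 0 < ν) (hfi : IntegrableOn f (Ioi 0)) :
    Tendsto (fun x ↦ (∫ r in 0..x, f r) * exp (c * x ^ (-ν))) atTop
      (𝓝 (∫ r in Ioi 0, f r)) := by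
  have hexp : Tendsto (fun x : ℝ ↦ exp (c * x ^ (-ν))) atTop (𝓝 1) := by
    simpa using ((tendsto_rpow_neg_atTop hν).const_mul c).rexp
  simpa using (intervalIntegral_tendsto_integral_Ioi 0 hfi tendsto_id).mul hexp

lemma integral_Ioi_mul_exp_neg_div_rpow_le (hν : 0 < ν) (hfi : IntegrableOn f (Ioi 0))
    (hfc : ContinuousOn f (Ioi 0))
    (hf : ∀ x, 0 < x → x ^ (ν + 1) * f x ≤ c * ν * ∫ r in 0..x, f r) {δ : ℝ} (hδ : 0 < δ) :
    (∫ r in Ioi 0, f r) * exp (-c / δ ^ ν) ≤ ∫ r in 0..δ, f r := by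
  have hfi' (x : ℝ) (hx : 0 < x) : IntervalIntegrable f volume 0 x :=
    (intervalIntegrable_iff_integrableOn_Ioc_of_le hx.le).2 (hfi.mono_set Ioc_subset_Ioi_self)
  have hle : ∫ r in Ioi 0, f r ≤ (∫ r in 0..δ, f r) * exp (c * δ ^ (-ν)) :=
    le_of_tendsto (tendsto_integral_mul_exp_rpow_neg hν hfi) <|
      (eventually_ge_atTop δ).mono fun x hx ↦
        antitoneOn_integral_mul_exp_rpow_neg hfi' hfc hf hδ (hδ.trans_le hx) hx
  have hexp : exp (-c / δ ^ ν) = (exp (c * δ ^ (-ν)))⁻¹ := by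
    rw [← exp_neg, rpow_neg hδ.le, neg_div, div_eq_mul_inv]
  rwa [hexp, ← div_eq_mul_inv, div_le_iff₀ (exp_pos _)]

end LogDerivative

section ExpNegMulRpow

variable {b c ν : ℝ}

lemma continuous_exp_neg_mul_rpow (hν : 0 ≤ ν) : Continuous fun r : ℝ ↦ exp (-b * r ^ ν) :=
  ((continuous_rpow_const hν).const_mul (-b)).rexp

lemma integrableOn_exp_neg_mul_rpow (hν : 0 < ν) (hb : 0 < b) :
    IntegrableOn (fun r : ℝ ↦ exp (-b * r ^ ν)) (Ioi 0) := by
  simpa only [rpow_zero, one_mul] using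
    integrableOn_rpow_mul_exp_neg_mul_rpow (s := 0) neg_one_lt_zero hν hb

lemma hasDerivAt_rpow_add_one_mul_exp_neg_mul_rpow {x : ℝ} (hx : x ≠ 0) :
    HasDerivAt (fun r ↦ r ^ (ν + 1) * exp (-b * r ^ ν))
      (((ν + 1) * x ^ ν - b * ν * (x ^ ν) ^ 2) * exp (-b * x ^ ν)) x := by
  have hpow : x ^ (ν + 1) * x ^ (ν - 1) = (x ^ ν) ^ 2 := by
    rw [rpow_add_one hx, rpow_sub_one hx]
    field_simp
  refine ((hasDerivAt_rpow_const (p := ν + 1) (Or.inl hx)).mul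
    ((hasDerivAt_rpow_const (p := ν) (Or.inl hx)).const_mul (-b)).exp).congr_deriv ?_
  rw [add_sub_cancel_right, ← hpow]
  ring

lemma mul_sub_mul_sq_le_of_sq_le {R : Type*} [CommRing R] [LinearOrder R] [IsStrictOrderedRing R]
    {p q d : R} (hq : 0 < q) (h : p ^ 2 ≤ 4 * q * d) (t : R) :
    p * t - q * t ^ 2 ≤ d := by
  refine le_of_mul_le_mul_left ?_ (mul_pos four_pos hq)
  linarith [sq_nonneg (p - 2 * q * t)]

lemma rpow_add_one_mul_exp_neg_mul_rpow_le_integral (hν : 0 < ν) (hb : 0 < b)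
    (hc : (ν + 1) ^ 2 ≤ 4 * b * c * ν ^ 2) {x : ℝ} (hx : 0 ≤ x) :
    x ^ (ν + 1) * exp (-b * x ^ ν) ≤ c * ν * ∫ r in 0..x, exp (-b * r ^ ν) := by
  have hcont : Continuous fun r : ℝ ↦ exp (-b * r ^ ν) := continuous_exp_neg_mul_rpow hν.le
  have hderiv_le (r : ℝ) : ((ν + 1) * r ^ ν - b * ν * (r ^ ν) ^ 2) * exp (-b * r ^ ν) ≤
      c * ν * exp (-b * r ^ ν) := by
    gcongr
    exact mul_sub_mul_sq_le_of_sq_le (mul_pos hb hν) (by linarith) _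
  have hle := intervalIntegral.sub_le_integral_of_hasDeriv_right_of_le hx
    ((continuous_rpow_const (by positivity)).mul hcont).continuousOn
    (fun r hr ↦ (hasDerivAt_rpow_add_one_mul_exp_neg_mul_rpow hr.1.ne').hasDerivWithinAt)
    (hcont.const_mul (c * ν)).integrableOn_Icc fun r _ ↦ hderiv_le r
  simpa [zero_rpow (by positivity : ν + 1 ≠ 0)] using hle

lemma integral_Ioi_exp_neg_mul_rpow_mul_exp_neg_div_rpow_le (hν : 0 < ν) (hb : 0 < b)
    (hc : (ν + 1) ^ 2 ≤ 4 * b * c * ν ^ 2) {δ : ℝ} (hδ : 0 < δ) :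
    (∫ r in Ioi (0 : ℝ), exp (-b * r ^ ν)) * exp (-c / δ ^ ν) ≤
      ∫ r in 0..δ, exp (-b * r ^ ν) :=
  integral_Ioi_mul_exp_neg_div_rpow_le hν (integrableOn_exp_neg_mul_rpow hν hb)
    (continuous_exp_neg_mul_rpow hν.le).continuousOn
    (fun _ hx ↦ rpow_add_one_mul_exp_neg_mul_rpow_le_integral hν hb hc hx.le) hδ

end ExpNegMulRpow

/-- For every `ν > 0` there is `c > (ν+1)²/(4ν)` such that for all `δ > 0`,
`∫₀^δ exp(-r^ν/2) dr ≥ c_ν⁻¹ · exp(-c/δ^ν)`, where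
`c_ν⁻¹ = ∫₀^∞ exp(-r^ν/2) dr`. -/
theorem small_ball_exp_integral_lower_bound (ν : ℝ) (hν : 0 < ν) :
    ∃ c : ℝ, c > (ν + 1) ^ 2 / (4 * ν) ∧
      ∀ δ : ℝ, 0 < δ →
        ∫ r in (0:ℝ)..δ, Real.exp (-(r ^ ν) / 2) ≥
          (∫ r in Set.Ioi (0:ℝ), Real.exp (-(r ^ ν) / 2)) * Real.exp (-c / δ ^ ν) := by
  have hthreshold : 0 < (ν + 1) ^ 2 / (2 * ν ^ 2) := by positivity
  refine ⟨(ν + 1) ^ 2 / (4 * ν) + (ν + 1) ^ 2 / (2 * ν ^ 2), by linarith, fun δ hδ ↦ ?_⟩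
  have hdiscrim : (ν + 1) ^ 2 ≤
      4 * (1 / 2) * ((ν + 1) ^ 2 / (4 * ν) + (ν + 1) ^ 2 / (2 * ν ^ 2)) * ν ^ 2 := by
    calc (ν + 1) ^ 2 = 4 * (1 / 2) * ((ν + 1) ^ 2 / (2 * ν ^ 2)) * ν ^ 2 := by
          field_simp
          norm_num
      _ ≤ _ := by
          gcongr
          exact le_add_of_nonneg_left (by positivity)
  have hexp (r : ℝ) : -(r ^ ν) / 2 = -(1 / 2) * r ^ ν := by ring
  simp only [hexp]
  exact integral_Ioi_exp_neg_mul_rpow_mul_exp_neg_div_rpow_le hν one_half_pos hdiscrim hδ
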